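/- arXiv:1711.04367 — 3 statements merged into one kernel-verified Lean document; each statement's English description precedes it below -/
import Mathlib

section
/- Let n, d be natural numbers with 1 ≤ d and 3d ≤ n. Then, as real numbers, C(n−2d, d) / C(n+1, d+1) ≥ ((d+1)/(n+1)) · ((n−3d+1)/(n−d+1))^d, where C(a,b) denotes the binomial coefficient a choose b. -/
theorem asc_aux (m M k : ℕ) (h : m ≤ M) :
    (m + 1) ^ k * (M + 1).ascFactorial k ≤ (M + 1) ^ k * (m + 1).ascFactorial k := by
  induction k with
  | zero => simp
  | succ k ih =>
    rw [Nat.ascFactorial_succ, Nat.ascFactorial_succ, pow_succ, pow_succ]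
    have h2 : (m + 1) * (M + 1 + k) ≤ (M + 1) * (m + 1 + k) := by nlinarith
    calc _ = ((m + 1) ^ k * (M + 1).ascFactorial k) * ((m + 1) * (M + 1 + k)) := by ring
      _ ≤ ((M + 1) ^ k * (m + 1).ascFactorial k) * ((M + 1) * (m + 1 + k)) :=
        Nat.mul_le_mul ih h2
      _ = _ := by ring

theorem choose_aux (m M k : ℕ) (h : m ≤ M) :
    (m + 1) ^ k * (M + k).choose k ≤ (M + 1) ^ k * (m + k).choose k := by
  have := asc_aux m M k h
  rw [Nat.ascFactorial_eq_factorial_mul_choose, Nat.ascFactorial_eq_factorial_mul_choose] at this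
  refine Nat.le_of_mul_le_mul_left ?_ (Nat.factorial_pos k)
  linarith

theorem binomial_ratio_lower_bound (n d : ℕ) (hd : 1 ≤ d) (hn : 3 * d ≤ n) :
    ((n - 2 * d).choose d : ℝ) / ((n + 1).choose (d + 1) : ℝ) ≥
      ((d : ℝ) + 1) / ((n : ℝ) + 1) *
        (((n : ℝ) - 3 * d + 1) / ((n : ℝ) - d + 1)) ^ d := by
  obtain ⟨m, rfl⟩ := Nat.exists_eq_add_of_le hn
  have h1 := choose_aux m (m + 2 * d) d (by omega)
  have e1 : 3 * d + m - 2 * d = m + d := by omega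
  have e2 : m + 2 * d + d = 3 * d + m := by ring
  have h3 := Nat.add_one_mul_choose_eq (3 * d + m) d
  rw [e2] at h1
  rw [e1]
  have hc : (0 : ℝ) < (3 * d + m + 1).choose (d + 1) := by
    exact_mod_cast Nat.choose_pos (by omega)
  have h1' : ((m : ℝ) + 1) ^ d * ((3 * d + m).choose d : ℝ)
      ≤ ((m : ℝ) + 2 * d + 1) ^ d * ((m + d).choose d : ℝ) := by exact_mod_cast h1
  have h3' : (3 * (d : ℝ) + m + 1) * ((3 * d + m).choose d : ℝ)
      = ((3 * d + m + 1).choose (d + 1) : ℝ) * (d + 1) := by exact_mod_cast h3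
  push_cast
  have a1 : 3 * (d : ℝ) + m - 3 * d + 1 = m + 1 := by ring
  have a2 : 3 * (d : ℝ) + m - d + 1 = m + 2 * d + 1 := by ring
  rw [a1, a2, ge_iff_le, le_div_iff₀ hc, div_pow, div_mul_div_comm, div_mul_eq_mul_div,
    div_le_iff₀ (by positivity)]
  calc _ = (((3 * d + m + 1).choose (d + 1) : ℝ) * (d + 1)) * ((m : ℝ) + 1) ^ d := by ring
    _ = (3 * (d : ℝ) + m + 1) * (((m : ℝ) + 1) ^ d * ((3 * d + m).choose d : ℝ)) := by
      rw [← h3']; ring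
    _ ≤ (3 * (d : ℝ) + m + 1) * (((m : ℝ) + 2 * d + 1) ^ d * ((m + d).choose d : ℝ)) := by
      gcongr
    _ = _ := by ring
end

section
/- Let n, d be natural numbers with d ≥ 8 and 4d² + d ≤ n + 1. Then 4 · C(n+1, d+1) ≤ n · C(n−2d, d), where C(a,b) denotes the binomial coefficient a choose b. -/
theorem aux_desc (m d : ℕ) : ∀ k : ℕ, k ≤ d → 3 * d ≤ m + 2 * d →  2 * d + d ≤ m + 2 * d →
    ((m + 2 * d : ℤ) - d + 1 - 2 * d * k) * ((m + 2 * d).descFactorial k : ℤ)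
      ≤ ((m + 2 * d : ℤ) - d + 1) * (m.descFactorial k : ℤ) := by
  intro k
  induction k with
  | zero => intro _ _ _; simp
  | succ k ih =>
    intro hk h1 h2
    have ih := ih (by omega) h1 h2
    rw [Nat.descFactorial_succ, Nat.descFactorial_succ]
    have hkm : k ≤ m := by omega
    push_cast [Nat.cast_sub hkm, Nat.cast_sub (show k ≤ m + 2 * d by omega)]
    have hD : (0 : ℤ) ≤ ((m + 2 * d).descFactorial k : ℤ) := by positivity
    generalize ((m + 2 * d).descFactorial k : ℤ) = D at *
    generalize (m.descFactorial k : ℤ) = D' at *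
    have hmk : (0 : ℤ) ≤ (m : ℤ) - k := by omega
    have h3 := mul_le_mul_of_nonneg_left ih hmk
    have hdk : (0 : ℤ) ≤ 2 * d * k := by positivity
    have h4 : (0 : ℤ) ≤ (d - 1 - k) + 2 * d * k := by
      have : (0 : ℤ) ≤ (d : ℤ) - 1 - k := by omega
      linarith
    have h5 : (0 : ℤ) ≤ 2 * d * (((d - 1 - k) + 2 * d * k) * D) := by positivity
    linarith

theorem choose_counting_bound (n d : ℕ) (hd : 8 ≤ d)
    (hn : 4 * d ^ 2 + d ≤ n + 1) :
    4 * (n + 1).choose (d + 1) ≤ n * (n - 2 * d).choose d := by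
  have hbig : 8 * d ≤ d ^ 2 := by nlinarith
  obtain ⟨m, rfl⟩ : ∃ m, n = m + 2 * d := ⟨n - 2 * d, by omega⟩
  rw [Nat.add_sub_cancel]
  have h := aux_desc m d d le_rfl (by omega) (by omega)
  rw [Nat.descFactorial_eq_factorial_mul_choose, Nat.descFactorial_eq_factorial_mul_choose] at h
  have hs := Nat.add_one_mul_choose_eq (m + 2 * d) d
  have hf : (0 : ℤ) < (d.factorial : ℤ) := by exact_mod_cast d.factorial_pos
  push_cast at h
  have h' : ((m + 2 * d : ℤ) - d + 1 - 2 * d * d) * ((m + 2 * d).choose d : ℤ)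
      ≤ ((m + 2 * d : ℤ) - d + 1) * (m.choose d : ℤ) := by
    refine le_of_mul_le_mul_left ?_ hf
    linarith
  have hM : (4 * d ^ 2 : ℤ) ≤ (m + 2 * d : ℤ) - d + 1 := by
    have : (4 * d ^ 2 + d : ℤ) ≤ (m + 2 * d : ℤ) + 1 := by exact_mod_cast hn
    linarith
  have hC : (0 : ℤ) ≤ ((m + 2 * d).choose d : ℤ) := by positivity
  have hMpos : (0 : ℤ) < (m + 2 * d : ℤ) - d + 1 := by
    have : (0 : ℤ) < 4 * d ^ 2 := by positivity
    linarith
  have h2 : (m + 2 * d).choose d ≤ 2 * m.choose d := by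
    have : ((m + 2 * d).choose d : ℤ) ≤ 2 * (m.choose d : ℤ) := by
      refine le_of_mul_le_mul_left ?_ hMpos
      have := mul_nonneg (sub_nonneg.2 hM) hC
      linarith
    exact_mod_cast this
  have hn8 : 8 * (m + 2 * d + 1) ≤ (m + 2 * d) * (d + 1) := by nlinarith
  refine Nat.le_of_mul_le_mul_right ?_ (Nat.succ_pos d)
  calc 4 * (m + 2 * d + 1).choose (d + 1) * (d + 1)
      = 4 * ((m + 2 * d + 1) * (m + 2 * d).choose d) := by rw [hs]; ring
    _ ≤ 4 * ((m + 2 * d + 1) * (2 * m.choose d)) := by gcongr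
    _ = 8 * (m + 2 * d + 1) * m.choose d := by ring
    _ ≤ (m + 2 * d) * (d + 1) * m.choose d := by gcongr
    _ = (m + 2 * d) * m.choose d * (d + 1) := by ring
end

section
/- Let n, d be natural numbers and let x, x', y : Fin n → Bool. Suppose x ≠ x', each of x and x' takes the value true on exactly d indices, y agrees with x on every index in the union of the supports of x and x' (the set of indices where x or x' is true), and the Hamming distance between x and y is exactly d. Then the Hamming distance between x' and y is strictly greater than d. -/
theorem hammingDist_gt_of_agree_on_supports (n d : ℕ) (x x' y : Fin n → Bool)
    (hxx' : x ≠ x')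
    (hx : (Finset.univ.filter fun i => x i = true).card = d)
    (hx' : (Finset.univ.filter fun i => x' i = true).card = d)
    (hagree : ∀ i : Fin n, x i = true ∨ x' i = true → y i = x i)
    (hham : hammingDist x y = d) :
    d < hammingDist x' y := by
  rw [← hham]
  unfold hammingDist
  apply Finset.card_lt_card
  rw [Finset.ssubset_iff_of_subset]
  · obtain ⟨i, hi⟩ := Function.ne_iff.mp hxx'
    refine ⟨i, ?_, ?_⟩ <;> simp only [Finset.mem_filter, Finset.mem_univ, true_and] <;>
    · have h := hagree i
      revert h hi
      cases x i <;> cases x' i <;> cases y i <;> simp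
  · intro i
    simp only [Finset.mem_filter, Finset.mem_univ, true_and]
    have h := hagree i
    revert h
    cases x i <;> cases x' i <;> cases y i <;> simp
end
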